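/- arXiv:2210.12183 — 6 statements merged into one kernel-verified Lean document; each statement's English description precedes it below -/
import Mathlib

section
/- The (P,w,π)-distance d_{(P,w,π)}(x,y) = w_{(P,w,π)}(x−y) is a metric on 𝔽_q^N; that is, for all x,y,z ∈ 𝔽_q^N: d_{(P,w,π)}(x,y) ≥ 0 with equality iff x = y, d_{(P,w,π)}(x,y) = d_{(P,w,π)}(y,x), and d_{(P,w,π)}(x,y) ≤ d_{(P,w,π)}(x,z) + d_{(P,w,π)}(z,y). -/
open scoped Classical

noncomputable section

variable {F : Type*} [Field F] [Fintype F]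
variable {ι : Type*} [Fintype ι] [PartialOrder ι]

/-- The block weight induced by `w`: the maximum of the weights of the coordinates. -/
def blockWt (w : F → ℕ) {m : ℕ} (v : Fin m → F) : ℕ :=
  Finset.univ.sup fun t => w (v t)

/-- `M_w`, the maximum weight of an element of `F`. -/
def maxWt (w : F → ℕ) : ℕ := Finset.univ.sup w

/-- The order ideal (down-set) of the poset generated by a finite set `A`. -/
def genIdeal (A : Finset ι) : Finset ι := Finset.univ.filter fun i => ∃ j ∈ A, i ≤ j

/-- The set of maximal elements of a finite set `I`. -/
def maxElems (I : Finset ι) : Finset ι := I.filter fun i => ∀ j ∈ I, i ≤ j → j = i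

/-- The π-support of a block vector. -/
def suppPi (k : ι → ℕ) (x : ∀ i, Fin (k i) → F) : Finset ι :=
  Finset.univ.filter fun i => x i ≠ 0

/-- The `(P,w,π)`-weight. -/
def wtP (w : F → ℕ) (k : ι → ℕ) (x : ∀ i, Fin (k i) → F) : ℕ :=
  ∑ i ∈ maxElems (genIdeal (suppPi k x)), blockWt w (x i)
    + maxWt w * ((genIdeal (suppPi k x)) \ maxElems (genIdeal (suppPi k x))).card

/-- The `(P,w,π)`-distance. -/
def dP (w : F → ℕ) (k : ι → ℕ) (x y : ∀ i, Fin (k i) → F) : ℕ := wtP w k (x - y)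

/-- Local contribution of a coordinate to the weight. -/
def locWt (w : F → ℕ) (k : ι → ℕ) (x : ∀ i, Fin (k i) → F) (i : ι) : ℕ :=
  if ∃ j, i < j ∧ x j ≠ 0 then maxWt w else blockWt w (x i)

theorem blockWt_le_maxWt (w : F → ℕ) {m : ℕ} (v : Fin m → F) : blockWt w v ≤ maxWt w :=
  Finset.sup_le fun t _ => Finset.le_sup (f := w) (Finset.mem_univ (v t))

theorem blockWt_eq_zero (w : F → ℕ) (hw0 : ∀ a : F, w a = 0 ↔ a = 0) {m : ℕ} (v : Fin m → F) :
    blockWt w v = 0 ↔ v = 0 := by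
  unfold blockWt
  rw [← Nat.bot_eq_zero, Finset.sup_eq_bot_iff]
  simp [hw0, funext_iff]

theorem blockWt_add (w : F → ℕ) (hwadd : ∀ a b : F, w (a + b) ≤ w a + w b) {m : ℕ}
    (u v : Fin m → F) : blockWt w (u + v) ≤ blockWt w u + blockWt w v := by
  refine Finset.sup_le fun t _ => (hwadd (u t) (v t)).trans (Nat.add_le_add ?_ ?_)
  · exact Finset.le_sup (f := fun t => w (u t)) (Finset.mem_univ t)
  · exact Finset.le_sup (f := fun t => w (v t)) (Finset.mem_univ t)

theorem mem_genIdeal_suppPi (k : ι → ℕ) (x : ∀ i, Fin (k i) → F) (i : ι) :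
    i ∈ genIdeal (suppPi k x) ↔ ∃ j, x j ≠ 0 ∧ i ≤ j := by
  simp [genIdeal, suppPi]

theorem mem_maxElems_suppPi (k : ι → ℕ) (x : ∀ i, Fin (k i) → F) (i : ι) :
    i ∈ maxElems (genIdeal (suppPi k x)) ↔ x i ≠ 0 ∧ ¬ ∃ j, i < j ∧ x j ≠ 0 := by
  unfold maxElems
  rw [Finset.mem_filter, mem_genIdeal_suppPi]
  constructor
  · rintro ⟨⟨j, hj, hij⟩, h⟩
    have e := h j ((mem_genIdeal_suppPi k x j).2 ⟨j, hj, le_rfl⟩) hij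
    subst e
    refine ⟨hj, ?_⟩
    rintro ⟨l, hl, hx⟩
    exact hl.ne' (h l ((mem_genIdeal_suppPi k x l).2 ⟨l, hx, le_rfl⟩) hl.le)
  · rintro ⟨hx, h⟩
    refine ⟨⟨i, hx, le_rfl⟩, fun j hj hij => ?_⟩
    obtain ⟨l, hl, hjl⟩ := (mem_genIdeal_suppPi k x j).1 hj
    by_contra hne
    exact h ⟨l, (lt_of_le_of_ne hij (Ne.symm hne)).trans_le hjl, hl⟩

theorem wtP_eq_sum (w : F → ℕ) (hw0 : ∀ a : F, w a = 0 ↔ a = 0) (k : ι → ℕ)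
    (x : ∀ i, Fin (k i) → F) : wtP w k x = ∑ i, locWt w k x i := by
  have hsub : maxElems (genIdeal (suppPi k x)) ⊆ genIdeal (suppPi k x) := Finset.filter_subset _ _
  have h1 : ∑ i, locWt w k x i = ∑ i ∈ genIdeal (suppPi k x), locWt w k x i := by
    symm
    apply Finset.sum_subset (Finset.subset_univ _)
    intro i _ hi
    rw [mem_genIdeal_suppPi] at hi
    unfold locWt
    rw [if_neg (fun ⟨j, hj, hx⟩ => hi ⟨j, hx, hj.le⟩), blockWt_eq_zero w hw0]
    by_contra hx
    exact hi ⟨i, hx, le_rfl⟩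
  rw [h1, ← Finset.sum_sdiff hsub, add_comm]
  unfold wtP
  congr 1
  · apply Finset.sum_congr rfl
    intro i hi
    rw [mem_maxElems_suppPi] at hi
    unfold locWt
    rw [if_neg hi.2]
  · rw [Finset.sum_congr rfl (g := fun _ => maxWt w)]
    · rw [Finset.sum_const, smul_eq_mul, mul_comm]
    intro i hi
    rw [Finset.mem_sdiff, mem_maxElems_suppPi, mem_genIdeal_suppPi] at hi
    obtain ⟨⟨j, hj, hij⟩, h⟩ := hi
    unfold locWt
    rw [if_pos]
    by_contra hn
    rcases hij.eq_or_lt with e | hlt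
    · subst e
      exact h ⟨hj, hn⟩
    · exact hn ⟨j, hlt, hj⟩

theorem blockWt_le_locWt (w : F → ℕ) (k : ι → ℕ) (x : ∀ i, Fin (k i) → F) (i : ι) :
    blockWt w (x i) ≤ locWt w k x i := by
  unfold locWt
  split_ifs
  · exact blockWt_le_maxWt w _
  · exact le_rfl

theorem locWt_add (w : F → ℕ) (hwadd : ∀ a b : F, w (a + b) ≤ w a + w b)
    (k : ι → ℕ) (x y : ∀ i, Fin (k i) → F) (i : ι) :
    locWt w k (x + y) i ≤ locWt w k x i + locWt w k y i := by
  by_cases h : ∃ j, i < j ∧ (x + y) j ≠ 0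
  · have e : locWt w k (x + y) i = maxWt w := if_pos h
    rw [e]
    obtain ⟨j, hij, hj⟩ := h
    by_cases hx : x j = 0
    · have hy : y j ≠ 0 := fun hy => hj (by simp [hx, hy])
      have e2 : locWt w k y i = maxWt w := if_pos ⟨j, hij, hy⟩
      omega
    · have e2 : locWt w k x i = maxWt w := if_pos ⟨j, hij, hx⟩
      omega
  · have e : locWt w k (x + y) i = blockWt w (x i + y i) := if_neg h
    rw [e]
    exact (blockWt_add w hwadd _ _).trans
      (Nat.add_le_add (blockWt_le_locWt w k x i) (blockWt_le_locWt w k y i))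

theorem locWt_neg (w : F → ℕ) (hwneg : ∀ a : F, w (-a) = w a)
    (k : ι → ℕ) (x : ∀ i, Fin (k i) → F) (i : ι) :
    locWt w k (-x) i = locWt w k x i := by
  simp [locWt, blockWt, hwneg]

/-- the `(P,w,π)`-distance is a metric on `𝔽_q^N`. -/
theorem stmt0 (w : F → ℕ) (hw0 : ∀ a : F, w a = 0 ↔ a = 0)
    (hwneg : ∀ a : F, w (-a) = w a) (hwadd : ∀ a b : F, w (a + b) ≤ w a + w b)
    (k : ι → ℕ) (x y z : ∀ i, Fin (k i) → F) :
    0 ≤ dP w k x y ∧ (dP w k x y = 0 ↔ x = y) ∧ dP w k x y = dP w k y x ∧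
      dP w k x y ≤ dP w k x z + dP w k z y := by
  have key := wtP_eq_sum w hw0 k
  refine ⟨Nat.zero_le _, ?_, ?_, ?_⟩
  · unfold dP
    rw [key]
    constructor
    · intro h
      rw [Finset.sum_eq_zero_iff] at h
      funext i
      have hi := blockWt_le_locWt w k (x - y) i
      rw [h i (Finset.mem_univ i), Nat.le_zero, blockWt_eq_zero w hw0] at hi
      exact sub_eq_zero.1 hi
    · rintro rfl
      apply Finset.sum_eq_zero
      intro i _
      simp only [sub_self, locWt]
      rw [if_neg (by simp), blockWt_eq_zero w hw0]
      rfl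
  · unfold dP
    rw [key, key, ← neg_sub y x]
    exact Finset.sum_congr rfl fun i _ => locWt_neg w hwneg k _ i
  · unfold dP
    rw [key, key, key, ← Finset.sum_add_distrib, ← sub_add_sub_cancel x z y]
    exact Finset.sum_le_sum fun i _ => locWt_add w hwadd k _ _ i
end
end

section
/- Suppose k_i = 1 for all i ∈ [n] (so N = n and the (P,w,π)-weight is the weighted coordinates poset weight w_{(P,w)}). Then for any 1 ≤ r ≤ n·M_w, the number of u ∈ 𝔽_q^n with w_{(P,w)}(u) = r is |A_r| = Σ_{i=1}^{n} Σ_{j=1}^{i} Σ_{I ∈ 𝓘_j^i} Σ_{(b_1,…,b_j) ∈ PRT_{i−j}[r] having exactly j parts} q^{i−j} · Π_{s=1}^{l} |D_{t_s}|^{r_s} · C(j − (r_1+⋯+r_{s−1}), r_s), where t_1,…,t_l are the distinct values among the parts b_1,…,b_j with multiplicities r_1,…,r_l, r_0 = 0, and C(a,b) is the binomial coefficient. -/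
open scoped Classical

noncomputable section

variable {F : Type*} [Field F] [Fintype F]
variable {ι : Type*} [Fintype ι] [PartialOrder ι]

/-- `D_r = {α ∈ F : w(α) = r}`. -/
def Dset (w : F → ℕ) (r : ℕ) : Finset F := Finset.univ.filter fun a => w a = r

/-- `D_r^k = {v ∈ F^k : w̃^k(v) = r}`. -/
def Dk (w : F → ℕ) (m r : ℕ) : Finset (Fin m → F) :=
  Finset.univ.filter fun v => blockWt w v = r

/-- `I` is an order ideal (down-set) of the poset. -/
def IsIdeal (I : Finset ι) : Prop := ∀ a b : ι, a ≤ b → b ∈ I → a ∈ I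

/-- The collection `𝓘_j^i` of ideals of cardinality `i` with exactly `j` maximal elements. -/
def idealsWithMax (ι : Type*) [Fintype ι] [PartialOrder ι] (j i : ℕ) : Finset (Finset ι) :=
  Finset.univ.filter fun I => IsIdeal I ∧ I.card = i ∧ (maxElems I).card = j

/-- The support of a vector. -/
def suppV (v : ι → F) : Finset ι := Finset.univ.filter fun i => v i ≠ 0

/-- The `(P,w)`-weight (the case where all blocks have dimension 1). -/
def wtPw (w : F → ℕ) (v : ι → F) : ℕ :=
  ∑ i ∈ maxElems (genIdeal (suppV v)), w (v i)
    + maxWt w * ((genIdeal (suppV v)) \ maxElems (genIdeal (suppV v))).card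

/-- `PRT_m[r]` restricted to partitions with exactly `j` parts: partitions of `r - m·M_w`
into parts each in `{1,…,R}`, with between `1` and `n - m` parts, and exactly `j` parts. -/
def PRTparts (n R m r j : ℕ) : Finset (Nat.Partition (r - m * R)) :=
  Finset.univ.filter fun p => p.parts.card = j ∧ (∀ x ∈ p.parts, x ≤ R) ∧
    1 ≤ p.parts.card ∧ p.parts.card ≤ n - m

lemma aux_prod_single {α : Type*} (s : Finset α) (m : α → Multiset ℕ) (c : α → ℕ) :
    ∏ i ∈ s, (AddMonoidAlgebra.single (m i) (c i) : AddMonoidAlgebra ℕ (Multiset ℕ)) =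
      AddMonoidAlgebra.single (∑ i ∈ s, m i) (∏ i ∈ s, c i) := by
  induction s using Finset.induction_on with
  | empty => simp [AddMonoidAlgebra.one_def]
  | insert a s ha ih =>
    rw [Finset.prod_insert ha, Finset.sum_insert ha, Finset.prod_insert ha, ih,
      AddMonoidAlgebra.single_mul_single]

lemma aux_mprod_single (k : Multiset ℕ) (d : ℕ → ℕ) :
    (k.map fun t => (AddMonoidAlgebra.single {t} (d t) :
      AddMonoidAlgebra ℕ (Multiset ℕ))).prod = AddMonoidAlgebra.single k (k.map d).prod := by
  induction k using Multiset.induction_on with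
  | empty => simp [AddMonoidAlgebra.one_def]
  | cons a s ih =>
    rw [Multiset.map_cons, Multiset.prod_cons, ih, AddMonoidAlgebra.single_mul_single,
      Multiset.map_cons, Multiset.prod_cons, Multiset.singleton_add]

lemma aux_coeff (w : F → ℕ) (j : ℕ) (p : Multiset ℕ) (hp : p.card = j) :
    ((∑ a : F, (AddMonoidAlgebra.single {w a} 1 :
      AddMonoidAlgebra ℕ (Multiset ℕ))) ^ j).coeff p =
      p.countPerms * (p.map fun t => (Dset w t).card).prod := by
  have h1 : (∑ a : F, (AddMonoidAlgebra.single {w a} 1 : AddMonoidAlgebra ℕ (Multiset ℕ))) =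
      ∑ t ∈ Finset.univ.image w ∪ p.toFinset, AddMonoidAlgebra.single {t} (Dset w t).card := by
    rw [← Finset.sum_fiberwise_of_maps_to (g := w)
      (t := Finset.univ.image w ∪ p.toFinset) (by intro a _; simp)]
    refine Finset.sum_congr rfl fun t _ => ?_
    rw [Finset.sum_congr (g := fun _ => AddMonoidAlgebra.single {t} 1) rfl
      (by intro a ha; rw [(Finset.mem_filter.1 ha).2])]
    rw [Finset.sum_const, AddMonoidAlgebra.smul_single]
    simp [Dset]
  rw [h1, Finset.sum_pow]
  simp only [Sym.val_eq_coe, aux_mprod_single]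
  rw [AddMonoidAlgebra.coeff_sum, Finset.sum_apply']
  subst hp
  refine (Finset.sum_eq_single (⟨p, rfl⟩ : Sym ℕ p.card) ?_ ?_).trans ?_
  · intro b _ hb
    rw [← nsmul_eq_mul]
    have : (b : Multiset ℕ) ≠ p := fun h => hb (Subtype.ext h)
    simp only [AddMonoidAlgebra.coeff_smul_apply, AddMonoidAlgebra.coeff_single, smul_eq_mul]
    exact mul_eq_zero_of_right _ (Finsupp.single_eq_of_ne this.symm)
  · intro h
    exfalso; apply h
    refine Finset.mem_sym_iff.2 ?_
    intro a ha
    have : a ∈ p := ha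
    simp [this]
  · rw [← nsmul_eq_mul]
    simp

lemma aux_fib (w : F → ℕ) (I T : Finset ι) (hT : T ⊆ I) (p : Multiset ℕ)
    (hp : p.card = T.card) :
    (Finset.univ.filter fun u : ι → F => (∀ i, i ∉ I → u i = 0) ∧
      T.val.map (fun i => w (u i)) = p).card =
    Fintype.card F ^ (I.card - T.card) * 
      (p.countPerms * (p.map fun t => (Dset w t).card).prod) := by
  let m : ι → F → Multiset ℕ := fun i a => if i ∈ T then {w a} else 0
  let c : ι → F → ℕ := fun i a => if i ∈ I then 1 else if a = 0 then 1 else 0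
  have key := Finset.prod_univ_sum (fun _ : ι => (Finset.univ : Finset F))
    (fun i a => (AddMonoidAlgebra.single (m i a) (c i a) : AddMonoidAlgebra ℕ (Multiset ℕ)))
  simp only [aux_prod_single] at key
  have hL : ∏ i : ι, ∑ a : F, (AddMonoidAlgebra.single (m i a) (c i a) :
        AddMonoidAlgebra ℕ (Multiset ℕ)) =
      (Fintype.card F ^ (I.card - T.card)) • (∑ a : F, (AddMonoidAlgebra.single {w a} 1 :
      AddMonoidAlgebra ℕ (Multiset ℕ))) ^ T.card := by
    have : ∀ i : ι, ∑ a : F, (AddMonoidAlgebra.single (m i a) (c i a) :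
        AddMonoidAlgebra ℕ (Multiset ℕ)) = (if i ∈ T then (∑ a : F, (AddMonoidAlgebra.single {w a} 1 :
      AddMonoidAlgebra ℕ (Multiset ℕ))) else 1) * (if i ∈ I \ T then (Fintype.card F : AddMonoidAlgebra ℕ (Multiset ℕ)) else 1) := by
      intro i
      by_cases h : i ∈ T
      · simp [m, c, h, hT h]
      · by_cases h' : i ∈ I
        · simp [m, c, h, h', ← AddMonoidAlgebra.one_def]
        · simp only [m, c, h, h', if_false, Finset.mem_sdiff, false_and]
          rw [Finset.sum_eq_single 0] <;> simp +contextual [AddMonoidAlgebra.one_def]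
    simp_rw [this]
    rw [Finset.prod_mul_distrib, Finset.prod_ite_mem, Finset.prod_ite_mem]
    simp [Finset.card_sdiff_of_subset hT, mul_comm]
  rw [hL] at key
  have := congrArg (fun x => x.coeff p) key
  simp only [AddMonoidAlgebra.coeff_smul_apply, aux_coeff w _ p hp, smul_eq_mul] at this
  rw [this, AddMonoidAlgebra.coeff_sum, Finset.sum_apply', Finset.card_filter]
  refine Finset.sum_congr (by ext; simp) fun u _ => ?_
  rw [AddMonoidAlgebra.coeff_single]
  have e1 : ∑ i, m i (u i) = T.val.map (fun i => w (u i)) := by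
    simp only [m, Finset.sum_ite_mem, Finset.univ_inter]
    rw [← Multiset.sum_map_singleton (T.val.map (fun i => w (u i))), Multiset.map_map]
    rfl
  have e2 : ∏ i, c i (u i) = if (∀ i, i ∉ I → u i = 0) then 1 else 0 := by
    split_ifs with h
    · apply Finset.prod_eq_one
      intro i _
      by_cases h' : i ∈ I <;> simp [c, h', h i]
    · push Not at h
      obtain ⟨i, h1, h2⟩ := h
      exact Finset.prod_eq_zero (Finset.mem_univ i) (by simp [c, h1, h2])
  rw [e1, e2, Finsupp.single_apply]
  split_ifs <;> simp_all

lemma aux_multinomial (s : Finset ℕ) (f : ℕ → ℕ) :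
    Nat.multinomial s f = ∏ t ∈ s, Nat.choose (∑ x ∈ s.filter (· ≤ t), f x) (f t) := by
  induction s using Finset.induction_on_max with
  | empty => simp
  | insert a s ha ih =>
    have hn : a ∉ s := fun h => lt_irrefl _ (ha a h)
    rw [Nat.multinomial_insert hn, Finset.prod_insert hn, ih]
    congr 1
    · rw [Finset.filter_true_of_mem, Finset.sum_insert hn]
      intro x hx
      rcases Finset.mem_insert.1 hx with rfl | h
      · exact le_rfl
      · exact (ha x h).le
    · refine Finset.prod_congr rfl fun t ht => ?_
      rw [Finset.filter_insert, if_neg (not_le.2 (ha t ht))]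

lemma aux_countPerms (p : Multiset ℕ) :
    p.countPerms = ∏ t ∈ p.toFinset,
      Nat.choose (p.card - Multiset.countP (fun x => t < x) p) (p.count t) := by
  have : p.countPerms = Nat.multinomial p.toFinset (fun t => p.count t) := by
    rfl
  rw [this, aux_multinomial]
  refine Finset.prod_congr rfl fun t ht => ?_
  congr 1
  have h := Multiset.card_eq_countP_add_countP (fun x => t < x) p
  have h2 : Multiset.countP (fun x => ¬ t < x) p =
      ∑ x ∈ p.toFinset.filter (· ≤ t), p.count x := by
    rw [Multiset.countP_eq_card_filter, ← Multiset.toFinset_sum_count_eq, Multiset.toFinset_filter]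
    simp only [not_lt]
    refine Finset.sum_congr rfl fun x hx => ?_
    exact Multiset.count_filter_of_pos (p := fun x => x ≤ t) (Finset.mem_filter.1 hx).2
  omega

lemma aux_gen (I : Finset ι) (hI : IsIdeal I) (u : ι → F) :
    genIdeal (suppV u) = I ↔ (∀ i, i ∉ I → u i = 0) ∧ ∀ i ∈ maxElems I, u i ≠ 0 := by
  constructor
  · rintro rfl
    refine ⟨fun i hi => ?_, fun i hi => ?_⟩
    · by_contra h
      exact hi (by simp only [genIdeal, suppV, Finset.mem_filter, Finset.mem_univ, true_and]
                   exact ⟨i, h, le_rfl⟩)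
    · obtain ⟨h1, h2⟩ := Finset.mem_filter.1 hi
      obtain ⟨j, hj, hij⟩ := (Finset.mem_filter.1 h1).2
      have := h2 j (Finset.mem_filter.2 ⟨Finset.mem_univ _, j, hj, le_rfl⟩) hij
      subst this
      exact (Finset.mem_filter.1 hj).2
  · rintro ⟨h1, h2⟩
    ext i
    simp only [genIdeal, suppV, Finset.mem_filter, Finset.mem_univ, true_and]
    constructor
    · rintro ⟨j, hj, hij⟩
      exact hI i j hij (by by_contra h; exact hj (h1 j h))
    · intro hi
      obtain ⟨b, hb, hm⟩ := I.exists_le_maximal hi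
      refine ⟨b, h2 b ?_, hb⟩
      refine Finset.mem_filter.2 ⟨hm.1, fun j hj hbj => le_antisymm (hm.2 hj hbj) hbj⟩

lemma aux_isIdeal (A : Finset ι) : IsIdeal (genIdeal A) := by
  intro a b hab hb
  obtain ⟨j, hj, hbj⟩ := (Finset.mem_filter.1 hb).2
  exact Finset.mem_filter.2 ⟨Finset.mem_univ _, j, hj, hab.trans hbj⟩

lemma aux_ideal (w : F → ℕ) (hw0 : ∀ a : F, w a = 0 ↔ a = 0) (r : ℕ) (I : Finset ι)
    (hI : IsIdeal I) (hne : 1 ≤ (maxElems I).card) :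
    (Finset.univ.filter fun u : ι → F => wtPw w u = r ∧ genIdeal (suppV u) = I).card =
      ∑ p ∈ PRTparts (Fintype.card ι) (maxWt w) (I.card - (maxElems I).card) r (maxElems I).card,
            Fintype.card F ^ (I.card - (maxElems I).card) *
              ∏ t ∈ p.parts.toFinset,
                (Dset w t).card ^ p.parts.count t *
                  Nat.choose ((maxElems I).card - Multiset.countP (fun x => t < x) p.parts)
                    (p.parts.count t) := by
  have hsub : maxElems I ⊆ I := Finset.filter_subset _ _
  have hle : (maxElems I).card ≤ I.card := Finset.card_le_card hsub
  have hIn : I.card ≤ Fintype.card ι := Finset.card_le_univ I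
  have hmax : ∀ a, w a ≤ maxWt w := fun a => Finset.le_sup (f := w) (Finset.mem_univ a)
  have step : ∀ p ∈ PRTparts (Fintype.card ι) (maxWt w) (I.card - (maxElems I).card) r
      (maxElems I).card, Fintype.card F ^ (I.card - (maxElems I).card) *
              ∏ t ∈ p.parts.toFinset,
                (Dset w t).card ^ p.parts.count t *
                  Nat.choose ((maxElems I).card - Multiset.countP (fun x => t < x) p.parts)
                    (p.parts.count t) =
      (Finset.univ.filter fun u : ι → F => (∀ i, i ∉ I → u i = 0) ∧
      (maxElems I).val.map (fun i => w (u i)) = p.parts).card := by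
    intro p hp
    have hc := (Finset.mem_filter.1 hp).2.1
    rw [aux_fib w I _ hsub p.parts hc, aux_countPerms, Finset.prod_mul_distrib,
      Finset.prod_multiset_map_count, hc]
    ring
  rw [Finset.sum_congr rfl step, ← Finset.card_biUnion]
  · congr 1
    ext u
    simp only [Finset.mem_filter, Finset.mem_univ, true_and, Finset.mem_biUnion]
    have hwt : genIdeal (suppV u) = I → wtPw w u =
        ((maxElems I).val.map (fun i => w (u i))).sum +
          (I.card - (maxElems I).card) * maxWt w := by
      intro h
      rw [wtPw, h, Finset.card_sdiff_of_subset hsub, mul_comm]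
      rfl
    constructor
    · rintro ⟨h1, h2⟩
      rw [hwt h2] at h1
      obtain ⟨g1, g2⟩ := (aux_gen I hI u).1 h2
      refine ⟨⟨(maxElems I).val.map (fun i => w (u i)), ?_, by omega⟩, ?_, g1, rfl⟩
      · intro x hx
        obtain ⟨i, hi, rfl⟩ := Multiset.mem_map.1 hx
        exact Nat.pos_of_ne_zero fun h => g2 i hi ((hw0 _).1 h)
      · refine Finset.mem_filter.2 ⟨Finset.mem_univ _, by simp, ?_, by simpa using hne, ?_⟩
        · intro x hx
          obtain ⟨i, hi, rfl⟩ := Multiset.mem_map.1 hx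
          exact hmax _
        · simp only [Multiset.card_map, Finset.card_val]
          omega
    · rintro ⟨p, hp, g1, g2⟩
      have hgen : genIdeal (suppV u) = I := by
        refine (aux_gen I hI u).2 ⟨g1, fun i hi h0 => ?_⟩
        have : w (u i) ∈ p.parts := by
          rw [← g2]; exact Multiset.mem_map_of_mem (fun i => w (u i)) hi
        have := p.parts_pos this
        rw [(hw0 _).2 h0] at this
        exact lt_irrefl _ this
      refine ⟨?_, hgen⟩
      rw [hwt hgen, g2, p.parts_sum]
      have hc := (Finset.mem_filter.1 hp).2.1
      have : 0 < p.parts.sum := by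
        obtain ⟨x, hx⟩ := Multiset.card_pos_iff_exists_mem.1 (by omega : 0 < p.parts.card)
        exact lt_of_lt_of_le (p.parts_pos hx) (Multiset.le_sum_of_mem hx)
      rw [p.parts_sum] at this
      omega
  · intro p _ p' _ hpp
    refine Finset.disjoint_left.2 fun u h1 h2 => hpp ?_
    exact Nat.Partition.ext ((Finset.mem_filter.1 h1).2.2.symm.trans (Finset.mem_filter.1 h2).2.2)

/-- the weight distribution of the `(P,w)`-space (all blocks of dimension 1),
expressed via partitions, the multiplicities `r_s` of their distinct parts `t_s`, and the
binomial coefficients `C(j - (r_1 + ⋯ + r_{s-1}), r_s)`. -/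
theorem stmt7 (w : F → ℕ) (hw0 : ∀ a : F, w a = 0 ↔ a = 0)
    (hwneg : ∀ a : F, w (-a) = w a) (hwadd : ∀ a b : F, w (a + b) ≤ w a + w b)
    (r : ℕ) (hr1 : 1 ≤ r) (hr2 : r ≤ Fintype.card ι * maxWt w) :
    (Finset.univ.filter fun u : ι → F => wtPw w u = r).card =
      ∑ i ∈ Finset.Icc 1 (Fintype.card ι), ∑ j ∈ Finset.Icc 1 i,
        ∑ I ∈ idealsWithMax ι j i,
          ∑ p ∈ PRTparts (Fintype.card ι) (maxWt w) (i - j) r j,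
            Fintype.card F ^ (i - j) *
              ∏ t ∈ p.parts.toFinset,
                (Dset w t).card ^ p.parts.count t *
                  Nat.choose (j - Multiset.countP (fun x => t < x) p.parts)
                    (p.parts.count t) := by
  have hgood : ∀ u : ι → F, wtPw w u = r → 1 ≤ (maxElems (genIdeal (suppV u))).card := by
    intro u hu
    rw [Nat.one_le_iff_ne_zero]
    intro h0
    have hI : genIdeal (suppV u) = ∅ := by
      by_contra hne
      obtain ⟨i, hi⟩ := Finset.nonempty_iff_ne_empty.2 hne
      obtain ⟨b, hb, hm⟩ := (genIdeal (suppV u)).exists_le_maximal hi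
      have : b ∈ maxElems (genIdeal (suppV u)) :=
        Finset.mem_filter.2 ⟨hm.1, fun j hj hbj => le_antisymm (hm.2 hj hbj) hbj⟩
      rw [Finset.card_eq_zero.1 h0] at this
      simp at this
    rw [wtPw, hI] at hu
    simp [maxElems] at hu
    omega
  have hle : ∀ I : Finset ι, (maxElems I).card ≤ I.card :=
    fun I => Finset.card_le_card (Finset.filter_subset _ _)
  rw [Finset.card_eq_sum_card_fiberwise (f := fun u => (genIdeal (suppV u)).card)
    (t := Finset.Icc 1 (Fintype.card ι))]
  swap
  · intro u hu
    have hu' := hgood u (by simpa using hu)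
    have := hle (genIdeal (suppV u))
    simp only [Finset.coe_Icc, Set.mem_Icc]
    exact ⟨by omega, Finset.card_le_univ _⟩
  refine Finset.sum_congr rfl fun i hi => ?_
  rw [Finset.card_eq_sum_card_fiberwise (f := fun u => (maxElems (genIdeal (suppV u))).card)
    (t := Finset.Icc 1 i)]
  swap
  · intro u hu
    simp only [Finset.coe_filter, Finset.mem_filter, Finset.mem_univ, true_and,
      Set.mem_setOf_eq] at hu
    have hu' := hgood u hu.1
    have := hle (genIdeal (suppV u))
    simp only [Finset.coe_Icc, Set.mem_Icc]
    omega
  refine Finset.sum_congr rfl fun j hj => ?_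
  rw [Finset.card_eq_sum_card_fiberwise (f := fun u => genIdeal (suppV u))
    (t := idealsWithMax ι j i)]
  swap
  · intro u hu
    simp only [Finset.coe_filter, Finset.mem_filter, Finset.mem_univ, true_and,
      Set.mem_setOf_eq] at hu
    exact Finset.mem_coe.2
      (Finset.mem_filter.2 ⟨Finset.mem_univ _, aux_isIdeal _, hu.1.2, hu.2⟩)
  refine Finset.sum_congr rfl fun I hI => ?_
  obtain ⟨hid, rfl, rfl⟩ := (Finset.mem_filter.1 hI).2
  rw [← aux_ideal w hw0 r I hid (Finset.mem_Icc.1 hj).1]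
  congr 1
  ext u
  simp only [Finset.mem_filter, Finset.mem_univ, true_and]
  constructor
  · rintro ⟨⟨⟨h, _⟩, _⟩, h'⟩
    exact ⟨h, h'⟩
  · rintro ⟨h, h'⟩
    exact ⟨⟨⟨h, by rw [h']⟩, by rw [h']⟩, h'⟩
end
end

section
/- Suppose k_i = 1 for all i ∈ [n] and P = ([n],⪯) is a chain 1 ⪯ 2 ⪯ ⋯ ⪯ n. Then: (i) for 1 ≤ r ≤ M_w, the number of v ∈ 𝔽_q^n with w_{(P,w)}(v) = r equals |D_r|; (ii) for r = t·M_w + k with 0 < k ≤ M_w and 1 ≤ t ≤ n−1, the number of v ∈ 𝔽_q^n with w_{(P,w)}(v) = r equals q^t·|D_k|. -/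
open scoped Classical

noncomputable section

variable {F : Type*} [Field F] [Fintype F]
variable {ι : Type*} [Fintype ι] [PartialOrder ι]

theorem wtPw_of_top {n : ℕ} (w : F → ℕ) (v : Fin n → F) (m : Fin n) (hm : v m ≠ 0)
    (h : ∀ j, m < j → v j = 0) : wtPw w v = m * maxWt w + w (v m) := by
  have h1 : genIdeal (suppV v) = Finset.Iic m := by
    ext i
    simp only [genIdeal, suppV, Finset.mem_filter, Finset.mem_univ, true_and, Finset.mem_Iic]
    constructor
    · rintro ⟨j, hj, hij⟩
      by_contra hc
      exact hj (h j (lt_of_lt_of_le (not_le.mp hc) hij))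
    · intro hi
      exact ⟨m, hm, hi⟩
  have h2 : maxElems (Finset.Iic m) = {m} := by
    ext i
    simp only [maxElems, Finset.mem_filter, Finset.mem_Iic, Finset.mem_singleton]
    constructor
    · rintro ⟨hi, hj⟩
      exact (hj m le_rfl hi).symm
    · rintro rfl
      exact ⟨le_rfl, fun j hj hij => le_antisymm hj hij⟩
  have h3 : (Finset.Iic m \ {m}).card = (m : ℕ) := by
    rw [Finset.card_sdiff_of_subset (by simp), Fin.card_Iic]
    simp
  have h4 : wtPw w v = w (v m) + maxWt w * (Finset.Iic m \ {m}).card := by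
    unfold wtPw
    rw [h1, h2, Finset.sum_singleton]
    congr!
  rw [h4, h3]
  ring

theorem wtPw_zero_vec {n : ℕ} (w : F → ℕ) (v : Fin n → F) (h : ∀ j, v j = 0) :
    wtPw w v = 0 := by
  have h1 : genIdeal (suppV v) = ∅ := by
    ext i
    simp [genIdeal, suppV, h]
  simp [wtPw, h1, maxElems]

theorem wtPw_iff {n : ℕ} (w : F → ℕ) (hw0 : ∀ a : F, w a = 0 ↔ a = 0) (v : Fin n → F)
    (t : Fin n) (k : ℕ) (hk : 0 < k) (hkM : k ≤ maxWt w) :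
    wtPw w v = t * maxWt w + k ↔ w (v t) = k ∧ ∀ j, t < j → v j = 0 := by
  constructor
  · intro hv
    by_cases hz : ∀ j, v j = 0
    · rw [wtPw_zero_vec w v hz] at hv
      omega
    · push Not at hz
      obtain ⟨j0, hj0⟩ := hz
      obtain ⟨m, hm, hmax⟩ := (suppV v).exists_max_image id ⟨j0, by simp [suppV, hj0]⟩
      have hm0 : v m ≠ 0 := by simpa [suppV] using hm
      have htop : ∀ j, m < j → v j = 0 := by
        intro j hj
        by_contra hc
        exact absurd (hmax j (by simp [suppV, hc])) (not_le.mpr hj)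
      rw [wtPw_of_top w v m hm0 htop] at hv
      have hpos : 0 < w (v m) := Nat.pos_of_ne_zero fun hc => hm0 ((hw0 _).1 hc)
      have hle : w (v m) ≤ maxWt w := Finset.le_sup (f := w) (Finset.mem_univ _)
      have hmt : m = t := by
        rcases lt_trichotomy m t with hlt | heq | hlt
        · have : (m : ℕ) + 1 ≤ t := hlt
          have := Nat.mul_le_mul_right (maxWt w) this
          rw [Nat.add_mul] at this
          omega
        · exact heq
        · have : (t : ℕ) + 1 ≤ m := hlt
          have := Nat.mul_le_mul_right (maxWt w) this
          rw [Nat.add_mul] at this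
          omega
      subst hmt
      exact ⟨by omega, htop⟩
  · rintro ⟨h1, h2⟩
    have : v t ≠ 0 := fun hc => by
      have := (hw0 _).2 hc
      omega
    rw [wtPw_of_top w v t this h2, h1]

theorem card_wtPw {n : ℕ} (w : F → ℕ) (hw0 : ∀ a : F, w a = 0 ↔ a = 0)
    (t : Fin n) (k : ℕ) (hk : 0 < k) (hkM : k ≤ maxWt w) :
    (Finset.univ.filter fun v : Fin n → F => wtPw w v = t * maxWt w + k).card =
      Fintype.card F ^ (t : ℕ) * (Dset w k).card := by
  have h1 : (Finset.univ.filter fun v : Fin n → F => wtPw w v = t * maxWt w + k) =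
      Fintype.piFinset (fun j : Fin n =>
        if j < t then Finset.univ else if j = t then Dset w k else {0}) := by
    ext v
    simp only [Finset.mem_filter, Finset.mem_univ, true_and, Fintype.mem_piFinset,
      wtPw_iff w hw0 v t k hk hkM]
    constructor
    · rintro ⟨h1, h2⟩ j
      rcases lt_trichotomy j t with hlt | rfl | hlt
      · simp [hlt]
      · simp [Dset, h1]
      · simp [hlt.not_gt, hlt.ne', h2 j hlt]
    · intro h
      refine ⟨by simpa [Dset] using h t, fun j hj => ?_⟩
      simpa [hj.not_gt, hj.ne'] using h j
  rw [h1, Fintype.card_piFinset]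
  have h2 : ∀ j : Fin n,
      (if j < t then (Finset.univ : Finset F) else if j = t then Dset w k else {0}).card =
      (if j ∈ Finset.Iio t then Fintype.card F else 1) *
        (if j = t then (Dset w k).card else 1) := by
    intro j
    rcases lt_trichotomy j t with hlt | rfl | hlt
    · simp [hlt, hlt.ne]
    · simp
    · simp [hlt.not_gt, hlt.ne']
  rw [Finset.prod_congr rfl fun j _ => h2 j, Finset.prod_mul_distrib, Finset.prod_ite_mem,
    Finset.prod_ite_eq']
  simp

/-- the weight distribution of the `(P,w)`-space when `P` is the chain
`1 ⪯ 2 ⪯ ⋯ ⪯ n` (modelled as `Fin n` with its natural order). -/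
theorem stmt8 (n : ℕ) (hn : 1 ≤ n) (w : F → ℕ) (hw0 : ∀ a : F, w a = 0 ↔ a = 0)
    (hwneg : ∀ a : F, w (-a) = w a) (hwadd : ∀ a b : F, w (a + b) ≤ w a + w b) :
    (∀ r : ℕ, 1 ≤ r → r ≤ maxWt w →
      (Finset.univ.filter fun v : Fin n → F => wtPw w v = r).card = (Dset w r).card) ∧
    (∀ t k : ℕ, 0 < k → k ≤ maxWt w → 1 ≤ t → t ≤ n - 1 →
      (Finset.univ.filter fun v : Fin n → F => wtPw w v = t * maxWt w + k).card =
        Fintype.card F ^ t * (Dset w k).card) := by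
  refine ⟨fun r h1 h2 => ?_, fun t k h1 h2 _ h4 => ?_⟩
  · simpa using card_wtPw w hw0 (⟨0, hn⟩ : Fin n) r h1 h2
  · exact card_wtPw w hw0 (⟨t, by omega⟩ : Fin n) k h1 h2
end
end

section
/- (Singleton bound for (P,w,π)-block codes) Let C ⊆ 𝔽_q^N be a code with at least two codewords, minimum distance d_{(P,w,π)}(C), and let r = ⌊(d_{(P,w,π)}(C)−1)/M_w⌋. Then max_{J ∈ 𝓘^r} Σ_{i∈J} k_i ≤ N − ⌈log_q |C|⌉; that is, for every ideal J of P of cardinality r, Σ_{i∈J} k_i ≤ N − ⌈log_q |C|⌉. -/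
open scoped Classical

noncomputable section

variable {F : Type*} [Field F] [Fintype F]
variable {ι : Type*} [Fintype ι] [PartialOrder ι]

/-- the Singleton bound for `(P,w,π)`-block codes: if `C` has at least two
codewords, minimum distance `d`, and `r = ⌊(d-1)/M_w⌋`, then for every ideal `J` of cardinality
`r`, `Σ_{i ∈ J} k_i ≤ N - ⌈log_q |C|⌉`. -/
theorem stmt13 (w : F → ℕ) (hw0 : ∀ a : F, w a = 0 ↔ a = 0)
    (hwneg : ∀ a : F, w (-a) = w a) (hwadd : ∀ a b : F, w (a + b) ≤ w a + w b)
    (k : ι → ℕ) (C : Finset (∀ i, Fin (k i) → F)) (hC : 2 ≤ C.card)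
    (d : ℕ) (hd : d = sInf {s : ℕ | ∃ c₁ ∈ C, ∃ c₂ ∈ C, c₁ ≠ c₂ ∧ dP w k c₁ c₂ = s}) :
    ∀ J : Finset ι, IsIdeal J → J.card = (d - 1) / maxWt w →
      ∑ i ∈ J, k i ≤ (∑ i : ι, k i) - Nat.clog (Fintype.card F) C.card := by
  intro J hJ hcard
  have hinj : Set.InjOn (fun (c : ∀ i, Fin (k i) → F) => fun i : {i // i ∉ J} => c i.1) (C : Set (∀ i, Fin (k i) → F)) := by
    intro c₁ h₁ c₂ h₂ h
    by_contra hne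
    have hle : d ≤ dP w k c₁ c₂ := by
      rw [hd]
      exact Nat.sInf_le ⟨c₁, h₁, c₂, h₂, hne, rfl⟩
    have hagree : ∀ i, i ∉ J → c₁ i = c₂ i := fun i hi => congrFun h ⟨i, hi⟩
    have hsub : genIdeal (suppPi k (c₁ - c₂)) ⊆ J := by
      intro i hi
      simp only [genIdeal, suppPi, Finset.mem_filter, Finset.mem_univ, true_and] at hi
      obtain ⟨j, hj, hij⟩ := hi
      refine hJ i j hij ?_
      by_contra hjJ
      exact hj (by simp [hagree j hjJ])
    have hwt : dP w k c₁ c₂ ≤ maxWt w * J.card := by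
      unfold dP wtP
      set I := genIdeal (suppPi k (c₁ - c₂)) with hI
      have hM : maxElems I ⊆ I := Finset.filter_subset _ _
      have h1 : ∑ i ∈ maxElems I, blockWt w ((c₁ - c₂) i) ≤ (maxElems I).card * maxWt w := by
        rw [← smul_eq_mul]
        refine Finset.sum_le_card_nsmul _ _ _ fun i _ => ?_
        exact Finset.sup_le fun t _ => Finset.le_sup (f := w) (Finset.mem_univ _)
      have h2 := Finset.card_sdiff_add_card_eq_card hM
      have h3 := Finset.card_le_card hsub
      calc _ ≤ (maxElems I).card * maxWt w + maxWt w * (I \ maxElems I).card := by gcongr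
        _ = maxWt w * I.card := by rw [← h2]; ring
        _ ≤ _ := by gcongr
    have hdiv : maxWt w * J.card ≤ d - 1 := by
      rw [hcard]; exact Nat.mul_div_le _ _
    have hd0 : d = 0 := by omega
    have hJ0 : J = ∅ := by
      rw [← Finset.card_eq_zero, hcard, hd0]; simp
    exact hne (funext fun i => hagree i (by simp [hJ0]))
  have hbound : C.card ≤ Fintype.card F ^ (∑ i ∈ Jᶜ, k i) := by
    have h := Finset.card_le_card_of_injOn
      (t := (Finset.univ : Finset (∀ i : {i // i ∉ J}, Fin (k i.1) → F))) _
      (fun _ _ => Finset.mem_coe.2 (Finset.mem_univ _)) hinj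
    refine h.trans (le_of_eq ?_)
    rw [Finset.card_univ, Fintype.card_pi]
    simp only [Fintype.card_fun, Fintype.card_fin]
    rw [Finset.prod_pow_eq_pow_sum]
    congr 1
    exact (Finset.sum_subtype Jᶜ (by simp) k).symm
  have hclog : Nat.clog (Fintype.card F) C.card ≤ ∑ i ∈ Jᶜ, k i :=
    Nat.clog_le_of_le_pow hbound
  have hsum := Finset.sum_add_sum_compl J k
  omega
end
end

section
/- (Singleton bound for (P,w)-codes) Let C ⊆ 𝔽_q^n be a code with at least two codewords and minimum distance d_{(P,w)}(C). Then ⌊(d_{(P,w)}(C)−1)/M_w⌋ ≤ n − ⌈log_q |C|⌉. -/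
open scoped Classical

noncomputable section

variable {F : Type*} [Field F] [Fintype F]
variable {ι : Type*} [Fintype ι] [PartialOrder ι]

theorem wtPw_le (w : F → ℕ) (v : ι → F) :
    wtPw w v ≤ maxWt w * (genIdeal (suppV v)).card := by
  have hsub : maxElems (genIdeal (suppV v)) ⊆ genIdeal (suppV v) := Finset.filter_subset _ _
  have h1 : ∑ i ∈ maxElems (genIdeal (suppV v)), w (v i)
      ≤ (maxElems (genIdeal (suppV v))).card * maxWt w := by
    rw [← smul_eq_mul]
    exact Finset.sum_le_card_nsmul _ _ _ fun i _ => Finset.le_sup (f := w) (Finset.mem_univ (v i))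
  have h2 := Finset.card_sdiff_add_card_eq_card hsub
  unfold wtPw
  rw [← h2, mul_add, mul_comm (maxWt w) (maxElems (genIdeal (suppV v))).card]
  omega

theorem exists_ideal (r : ℕ) (hr : r ≤ Fintype.card ι) :
    ∃ I : Finset ι, IsIdeal I ∧ I.card = r := by
  induction r with
  | zero => exact ⟨∅, fun a b _ hb => by simp at hb, rfl⟩
  | succ r ih =>
    obtain ⟨I, hI, hc⟩ := ih (by omega)
    have hne : (Iᶜ).Nonempty := by
      rw [← Finset.card_pos, Finset.card_compl]; omega
    obtain ⟨m, hm⟩ := (Iᶜ).exists_minimal hne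
    have hmI : m ∉ I := by simpa using hm.1
    refine ⟨insert m I, ?_, by rw [Finset.card_insert_of_notMem hmI, hc]⟩
    intro a b hab hb
    rw [Finset.mem_insert] at hb ⊢
    rcases hb with rfl | hb
    · by_cases ha : a ∈ I
      · exact Or.inr ha
      · exact Or.inl (le_antisymm hab (hm.2 (by simpa using ha) hab))
    · exact Or.inr (hI a b hab hb)

/-- the Singleton bound for `(P,w)`-codes:
`⌊(d_{(P,w)}(C) - 1)/M_w⌋ ≤ n - ⌈log_q |C|⌉`. -/
theorem stmt14 (w : F → ℕ) (hw0 : ∀ a : F, w a = 0 ↔ a = 0)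
    (hwneg : ∀ a : F, w (-a) = w a) (hwadd : ∀ a b : F, w (a + b) ≤ w a + w b)
    (C : Finset (ι → F)) (hC : 2 ≤ C.card)
    (d : ℕ) (hd : d = sInf {s : ℕ | ∃ c₁ ∈ C, ∃ c₂ ∈ C, c₁ ≠ c₂ ∧ wtPw w (c₁ - c₂) = s}) :
    (d - 1) / maxWt w ≤ Fintype.card ι - Nat.clog (Fintype.card F) C.card := by
  have hle : ∀ c₁ ∈ C, ∀ c₂ ∈ C, c₁ ≠ c₂ → d ≤ wtPw w (c₁ - c₂) := by
    intro c₁ h₁ c₂ h₂ h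
    rw [hd]
    exact Nat.sInf_le ⟨c₁, h₁, c₂, h₂, h, rfl⟩
  rcases Nat.eq_zero_or_pos ((d - 1) / maxWt w) with h0 | hpos
  · omega
  have hM : 0 < maxWt w := by
    rcases Nat.eq_zero_or_pos (maxWt w) with h | h
    · simp [h] at hpos
    · exact h
  have hmul : maxWt w * ((d - 1) / maxWt w) ≤ d - 1 := Nat.mul_div_le _ _
  have hd1 : 1 ≤ d := by
    have := Nat.mul_pos hM hpos
    omega
  generalize (d - 1) / maxWt w = r at *
  have hr : r ≤ Fintype.card ι := by
    obtain ⟨c₁, h₁, c₂, h₂, h⟩ := Finset.one_lt_card.1 (show 1 < C.card by omega)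
    have a1 := hle c₁ h₁ c₂ h₂ h
    have a2 := wtPw_le w (c₁ - c₂)
    have a3 : maxWt w * (genIdeal (suppV (c₁ - c₂))).card ≤ maxWt w * Fintype.card ι :=
      Nat.mul_le_mul_left _ (Finset.card_le_univ _)
    exact Nat.le_of_mul_le_mul_left (by omega) hM
  obtain ⟨I, hI, hc⟩ := exists_ideal (ι := ι) r hr
  have hcard : C.card ≤ Fintype.card F ^ (Fintype.card ι - r) := by
    have hinj : Set.InjOn (fun (c : ι → F) (i : (Iᶜ : Finset ι)) => c i) (C : Set (ι → F)) := by
      intro c₁ h₁ c₂ h₂ h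
      by_contra hne
      have a1 := hle c₁ h₁ c₂ h₂ hne
      have a2 := wtPw_le w (c₁ - c₂)
      have hsub : genIdeal (suppV (c₁ - c₂)) ⊆ I := by
        intro i hi
        simp only [genIdeal, suppV, Finset.mem_filter, Finset.mem_univ, true_and] at hi
        obtain ⟨j, hj, hij⟩ := hi
        refine hI i j hij ?_
        by_contra hjI
        apply hj
        have := congrFun h ⟨j, by simpa using hjI⟩
        simpa [sub_eq_zero] using this
      have a3 := Nat.mul_le_mul_left (maxWt w) (Finset.card_le_card hsub)
      rw [hc] at a3
      omega
    have := Finset.card_le_card_of_injOn (t := Finset.univ) _ (fun _ _ => Finset.mem_univ _) hinj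
    rw [Finset.card_univ, Fintype.card_fun, Fintype.card_coe, Finset.card_compl, hc] at this
    exact this
  have := Nat.clog_le_of_le_pow hcard
  omega
end
end

section
/- Let C ⊆ 𝔽_q^N be a code with at least two codewords, and let d_{(P,w,π)}(C) and d_{(P,π)}(C) be its minimum distances with respect to the (P,w,π)-metric and the (P,π)-metric respectively. Then ⌊(d_{(P,w,π)}(C)−1)/M_w⌋ ≤ d_{(P,π)}(C) − 1. -/
open scoped Classical

noncomputable section

variable {F : Type*} [Field F] [Fintype F]
variable {ι : Type*} [Fintype ι] [PartialOrder ι]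

/-- The `(P,π)`-weight: the cardinality of the ideal generated by the π-support. -/
def wtPpi (k : ι → ℕ) (x : ∀ i, Fin (k i) → F) : ℕ := (genIdeal (suppPi k x)).card

/-- `⌊(d_{(P,w,π)}(C) - 1)/M_w⌋ ≤ d_{(P,π)}(C) - 1` for any code `C` with at
least two codewords. -/
theorem stmt16 (w : F → ℕ) (hw0 : ∀ a : F, w a = 0 ↔ a = 0)
    (hwneg : ∀ a : F, w (-a) = w a) (hwadd : ∀ a b : F, w (a + b) ≤ w a + w b)
    (k : ι → ℕ) (C : Finset (∀ i, Fin (k i) → F)) (hC : 2 ≤ C.card)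
    (dw dpi : ℕ)
    (hdw : dw = sInf {s : ℕ | ∃ c₁ ∈ C, ∃ c₂ ∈ C, c₁ ≠ c₂ ∧ wtP w k (c₁ - c₂) = s})
    (hdpi : dpi = sInf {s : ℕ | ∃ c₁ ∈ C, ∃ c₂ ∈ C, c₁ ≠ c₂ ∧ wtPpi k (c₁ - c₂) = s}) :
    (dw - 1) / maxWt w ≤ dpi - 1 := by
  have hb : ∀ {m : ℕ} (v : Fin m → F), blockWt w v ≤ maxWt w := by
    intro m v
    exact Finset.sup_le fun t _ => Finset.le_sup (f := w) (Finset.mem_univ (v t))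
  have hle : ∀ x : (∀ i, Fin (k i) → F), wtP w k x ≤ maxWt w * wtPpi k x := by
    intro x
    unfold wtP wtPpi
    have hsub : maxElems (genIdeal (suppPi k x)) ⊆ genIdeal (suppPi k x) :=
      Finset.filter_subset _ _
    have h1 : ∑ i ∈ maxElems (genIdeal (suppPi k x)), blockWt w (x i)
        ≤ (maxElems (genIdeal (suppPi k x))).card * maxWt w := by
      have := Finset.sum_le_card_nsmul (maxElems (genIdeal (suppPi k x)))
        (fun i => blockWt w (x i)) (maxWt w) (fun i _ => hb (x i))
      simpa using this
    have h2 := Finset.card_sdiff_add_card_eq_card hsub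
    rw [← h2]
    nlinarith
  obtain ⟨a, ha, b, hbC, hab⟩ := Finset.one_lt_card.mp hC
  have hne : {s : ℕ | ∃ c₁ ∈ C, ∃ c₂ ∈ C, c₁ ≠ c₂ ∧ wtPpi k (c₁ - c₂) = s}.Nonempty :=
    ⟨_, a, ha, b, hbC, hab, rfl⟩
  have hmem := Nat.sInf_mem hne
  rw [← hdpi] at hmem
  obtain ⟨c₁, h₁, c₂, h₂, h12, hc⟩ := hmem
  have hdle : dw ≤ wtP w k (c₁ - c₂) := by
    rw [hdw]
    exact Nat.sInf_le ⟨c₁, h₁, c₂, h₂, h12, rfl⟩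
  have hfin : dw ≤ maxWt w * dpi := hc ▸ hdle.trans (hle _)
  rcases Nat.eq_zero_or_pos dw with h0 | hpos
  · simp [h0]
  · have : (dw - 1) / maxWt w < dpi := Nat.div_lt_of_lt_mul (by omega)
    omega
end
end
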